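/- Let K be any field, let E be a finite graph, and let w ∈ E^0 be a vertex such that w emits exactly one edge f, f is not a loop, and w receives edges from at most one vertex. Let G be the Move (R) at w graph, and set ε := Σ_{u ∈ E^0, u ≠ w} u ∈ L_K(E). Then ε is a full idempotent of L_K(E) (i.e., L_K(E) ε L_K(E) = L_K(E)) and L_K(G) is isomorphic as a K-algebra to the corner ring ε L_K(E) ε. -/

import Mathlib

/-!
Let `S = L_K(G)`, where `G` is the Move (R) graph, and `v₀ = r(f)`.  In `L_K(E)` one has
`w = f f*` and `f* f = v₀`, so `w` is equivalent to `v₀`, a summand of `ε`; since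
`1 = ε + w = ε + f ε f*`, the idempotent `ε` is full.

The isomorphism `φ : S → ε L_K(E) ε` (`moveRFamily`) fixes the vertices and the old edges and sends
`[ef]` to the product `e f`.  Injectivity comes from an explicit partial inverse instead of a
uniqueness theorem: a homomorphism `ψ : L_K(E) → M₂(S)` (`matrixFamily`) sends everything away from
`w` into the upper left corner, `w` to `E₂₂(v₀)`, `f` to `E₂₁(v₀)` and an edge `e` into `w` to
`E₁₂([ef])`.  On generators, hence everywhere, `ψ (φ x) = E₁₁(x)`.

For surjectivity, consider the `x ∈ L_K(E)` for which `ε x ε`, `ε x f`, `f* x ε` and `f* x f` all lie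
in the range of `φ`.  They are closed under products, because `1 = ε ε + f f*` may be inserted
between two factors, and they include all generators (`compress_mem`).

Neither `φ` nor `ψ` is unital, so both are produced by a universal property for families satisfying
all the Leavitt relations but the unit relation (`LeavittFamily.exists_hom`), obtained by mapping
into the corner ring at the sum of the vertices.
-/

/-! ## Finite directed graphs -/

structure FinGraph where
  V : Type
  E : Type
  [fintypeV : Fintype V]
  [fintypeE : Fintype E]
  [decEqV : DecidableEq V]
  [decEqE : DecidableEq E]
  s : E → V
  r : E → V

attribute [instance] FinGraph.fintypeV FinGraph.fintypeE FinGraph.decEqV FinGraph.decEqE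

namespace FinGraph

/-- A vertex is regular if it emits at least one edge. -/
def IsRegular (G : FinGraph) (v : G.V) : Prop := ∃ e : G.E, G.s e = v

/-- A sink emits no edges. -/
def IsSink (G : FinGraph) (v : G.V) : Prop := ∀ e : G.E, G.s e ≠ v

/-- A source receives no edges. -/
def IsSource (G : FinGraph) (v : G.V) : Prop := ∀ e : G.E, G.r e ≠ v

/-- A graph is totally looped if every regular vertex is the base of a loop. -/
def TotallyLooped (G : FinGraph) : Prop :=
  ∀ v : G.V, G.IsRegular v → ∃ e : G.E, G.s e = v ∧ G.r e = v

/-- A set of vertices is hereditary if it is closed under ranges of edges emitted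
from its elements (equivalently, under reachability by paths). -/
def Hereditary (G : FinGraph) (T : Finset G.V) : Prop :=
  ∀ e : G.E, G.s e ∈ T → G.r e ∈ T

/-- A set of vertices `H` is saturated if every regular vertex all of whose emitted
edges end in `H` belongs to `H`. -/
def Saturated (G : FinGraph) (H : Set G.V) : Prop :=
  ∀ v : G.V, G.IsRegular v → (∀ e : G.E, G.s e = v → G.r e ∈ H) → v ∈ H

/-- The trivial graph: one vertex, no edges. -/
def IsTrivial (G : FinGraph) : Prop :=
  Nonempty G.V ∧ Subsingleton G.V ∧ IsEmpty G.E

/-- A graph is source-free if every vertex receives at least one edge. -/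
def IsSourceFree (G : FinGraph) : Prop := ∀ v : G.V, ∃ e : G.E, G.r e = v

/-- The graph with `k` vertices and no edges. -/
def discrete (k : ℕ) : FinGraph where
  V := Fin k
  E := Empty
  s := Empty.elim
  r := Empty.elim

/-- The straight line graph `A_n` with `n` vertices `v_0, …, v_{n-1}` and
edges `v_{i+1} → v_i` for `0 ≤ i ≤ n-2`. -/
def line (n : ℕ) : FinGraph where
  V := Fin n
  E := Fin (n - 1)
  s := fun i => ⟨i.1 + 1, by have := i.isLt; omega⟩
  r := fun i => ⟨i.1, by have := i.isLt; omega⟩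

/-- Disjoint union of two graphs. -/
def disjUnion (G H : FinGraph) : FinGraph where
  V := G.V ⊕ H.V
  E := G.E ⊕ H.E
  s := Sum.map G.s H.s
  r := Sum.map G.r H.r

/-- The restriction graph of `G` to a hereditary set `T` of vertices. -/
def restrict (G : FinGraph) (T : Finset G.V) (hT : G.Hereditary T) : FinGraph where
  V := {v : G.V // v ∈ T}
  E := {e : G.E // G.s e ∈ T}
  s := fun e => ⟨G.s e.1, e.2⟩
  r := fun e => ⟨G.r e.1, hT e.1 e.2⟩

/-- The "strands of hair" extension `F⁺(n)` of `F`:  at each vertex `v` a strand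
`v^{n v - 1} → ⋯ → v^1 → v` of length `n v - 1` is attached. -/
def hairExtension (F : FinGraph) (n : F.V → ℕ) : FinGraph where
  V := F.V ⊕ (Σ v : F.V, Fin (n v - 1))
  E := F.E ⊕ (Σ v : F.V, Fin (n v - 1))
  s := Sum.elim (fun e => Sum.inl (F.s e)) (fun p => Sum.inr p)
  r := Sum.elim (fun e => Sum.inl (F.r e))
    (fun p => if h : (p.2 : ℕ) = 0 then Sum.inl p.1
      else Sum.inr ⟨p.1, ⟨(p.2 : ℕ) - 1, by have := p.2.isLt; omega⟩⟩)

/-- The "Move (R)" graph at a vertex `w` which emits precisely one edge `f`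
which is not a loop: `w` is removed, and each edge `e` into `w` is replaced by
an edge `[ef]` from `s e` to `r f`. -/
def moveR (E : FinGraph) (w : E.V) (f : E.E)
    (hsf : E.s f = w) (huniq : ∀ e : E.E, E.s e = w → e = f) (hnl : E.r f ≠ w) : FinGraph where
  V := {v : E.V // v ≠ w}
  E := {e : E.E // E.r e ≠ w ∧ e ≠ f} ⊕ {e : E.E // E.r e = w}
  s := Sum.elim
    (fun e => ⟨E.s e.1, fun h => e.2.2 (huniq e.1 h)⟩)
    (fun e => ⟨E.s e.1, fun h => hnl ((huniq e.1 h) ▸ e.2)⟩)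
  r := Sum.elim
    (fun e => ⟨E.r e.1, e.2.1⟩)
    (fun _ => ⟨E.r f, hnl⟩)

/-- The collapse of `E` at a vertex `v` which is not the base of a loop:
`v` is removed, and for every `e ∈ r⁻¹(v)` and `f ∈ s⁻¹(v)` an edge `[ef]`
from `s e` to `r f` is added. -/
def collapse (E : FinGraph) (v : E.V)
    (hnl : ∀ e : E.E, E.s e = v → E.r e ≠ v) : FinGraph where
  V := {u : E.V // u ≠ v}
  E := {e : E.E // E.r e ≠ v ∧ E.s e ≠ v} ⊕ ({e : E.E // E.r e = v} × {f : E.E // E.s f = v})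
  s := Sum.elim
    (fun e => ⟨E.s e.1, e.2.2⟩)
    (fun p => ⟨E.s p.1.1, fun h => (hnl p.1.1 h) p.1.2⟩)
  r := Sum.elim
    (fun e => ⟨E.r e.1, e.2.1⟩)
    (fun p => ⟨E.r p.2.1, hnl p.2.1 p.2.2⟩)

/-- The in-split graph of `E` at a vertex `v`, with respect to a partition of
`r⁻¹(v)` into `n` classes (encoded as a surjection `P : r⁻¹(v) → Fin n`). -/
def inSplit (E : FinGraph) (v : E.V) (n : ℕ) (P : {e : E.E // E.r e = v} → Fin n) : FinGraph where
  V := {u : E.V // u ≠ v} ⊕ Fin n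
  E := ({e : E.E // E.s e = v} × Fin n) ⊕ {f : E.E // E.s f ≠ v}
  s := Sum.elim (fun x => Sum.inr x.2) (fun f => Sum.inl ⟨E.s f.1, f.2⟩)
  r := Sum.elim
    (fun x => if h : E.r x.1.1 = v then Sum.inr (P ⟨x.1.1, h⟩) else Sum.inl ⟨E.r x.1.1, h⟩)
    (fun f => if h : E.r f.1 = v then Sum.inr (P ⟨f.1, h⟩) else Sum.inl ⟨E.r f.1, h⟩)

/-- The out-split graph of `E` at a vertex `v`, with respect to a partition of
`s⁻¹(v)` into `n` classes (encoded as a surjection `P : s⁻¹(v) → Fin n`). -/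
def outSplit (E : FinGraph) (v : E.V) (n : ℕ) (P : {e : E.E // E.s e = v} → Fin n) : FinGraph where
  V := {u : E.V // u ≠ v} ⊕ Fin n
  E := ({e : E.E // E.r e = v} × Fin n) ⊕ {f : E.E // E.r f ≠ v}
  r := Sum.elim (fun x => Sum.inr x.2) (fun f => Sum.inl ⟨E.r f.1, f.2⟩)
  s := Sum.elim
    (fun x => if h : E.s x.1.1 = v then Sum.inr (P ⟨x.1.1, h⟩) else Sum.inl ⟨E.s x.1.1, h⟩)
    (fun f => if h : E.s f.1 = v then Sum.inr (P ⟨f.1, h⟩) else Sum.inl ⟨E.s f.1, h⟩)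

/-- The source elimination graph `E \ v` at a source `v`. -/
def sourceElim (E : FinGraph) (v : E.V) (hsrc : E.IsSource v) : FinGraph where
  V := {u : E.V // u ≠ v}
  E := {e : E.E // E.s e ≠ v}
  s := fun e => ⟨E.s e.1, e.2⟩
  r := fun e => ⟨E.r e.1, fun h => hsrc e.1 h⟩

/-- A chain of source eliminations starting at `E`. -/
inductive ElimChain (E : FinGraph) : FinGraph → Type 1
  | refl : ElimChain E E
  | step {H : FinGraph} (c : ElimChain E H) (v : H.V) (hsrc : H.IsSource v) :
      ElimChain E (H.sourceElim v hsrc)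

/-- The canonical (injective) map from the vertices of the final graph of a
source elimination chain back into the vertices of the initial graph. -/
def ElimChain.vmap {E : FinGraph} : {F : FinGraph} → ElimChain E F → F.V → E.V
  | _, .refl, u => u
  | _, .step c _ _, u => c.vmap u.1

/-- A chain of collapses, each performed at a regular vertex which is not the
base of a loop. -/
inductive CollapseChain (E : FinGraph) : FinGraph → Prop
  | refl : CollapseChain E E
  | step {H : FinGraph} (c : CollapseChain E H) (v : H.V) (hreg : H.IsRegular v)
      (hnl : ∀ e : H.E, H.s e = v → H.r e ≠ v) :
      CollapseChain E (H.collapse v hnl)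

end FinGraph

/-! ## Leavitt path algebras -/

/-- Generators of the Leavitt path algebra: vertices, edges, and ghost edges. -/
inductive LPAGen (G : FinGraph) : Type
  | vert : G.V → LPAGen G
  | edge : G.E → LPAGen G
  | ghost : G.E → LPAGen G

/-- The defining relations of the Leavitt path algebra of a finite graph. -/
inductive LeavittRel (K : Type) [Field K] (G : FinGraph) :
    FreeAlgebra K (LPAGen G) → FreeAlgebra K (LPAGen G) → Prop
  | vertMul (v w : G.V) :
      LeavittRel K G (FreeAlgebra.ι K (LPAGen.vert v) * FreeAlgebra.ι K (LPAGen.vert w))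
        (if v = w then FreeAlgebra.ι K (LPAGen.vert v) else 0)
  | edgeLeft (e : G.E) :
      LeavittRel K G (FreeAlgebra.ι K (LPAGen.vert (G.s e)) * FreeAlgebra.ι K (LPAGen.edge e))
        (FreeAlgebra.ι K (LPAGen.edge e))
  | edgeRight (e : G.E) :
      LeavittRel K G (FreeAlgebra.ι K (LPAGen.edge e) * FreeAlgebra.ι K (LPAGen.vert (G.r e)))
        (FreeAlgebra.ι K (LPAGen.edge e))
  | ghostLeft (e : G.E) :
      LeavittRel K G (FreeAlgebra.ι K (LPAGen.vert (G.r e)) * FreeAlgebra.ι K (LPAGen.ghost e))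
        (FreeAlgebra.ι K (LPAGen.ghost e))
  | ghostRight (e : G.E) :
      LeavittRel K G (FreeAlgebra.ι K (LPAGen.ghost e) * FreeAlgebra.ι K (LPAGen.vert (G.s e)))
        (FreeAlgebra.ι K (LPAGen.ghost e))
  | ghostEdge (e f : G.E) :
      LeavittRel K G (FreeAlgebra.ι K (LPAGen.ghost e) * FreeAlgebra.ι K (LPAGen.edge f))
        (if e = f then FreeAlgebra.ι K (LPAGen.vert (G.r e)) else 0)
  | cuntzKrieger (v : G.V) (hv : G.IsRegular v) :
      LeavittRel K G (FreeAlgebra.ι K (LPAGen.vert v))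
        (∑ e ∈ Finset.univ.filter (fun e : G.E => G.s e = v),
          FreeAlgebra.ι K (LPAGen.edge e) * FreeAlgebra.ι K (LPAGen.ghost e))
  | unit :
      LeavittRel K G 1 (∑ v : G.V, FreeAlgebra.ι K (LPAGen.vert v))

/-- The Leavitt path algebra `L_K(G)` of a finite graph `G` with coefficients in
a field `K`. -/
abbrev LeavittPathAlgebra (K : Type) [Field K] (G : FinGraph) : Type :=
  RingQuot (LeavittRel K G)

namespace LeavittPathAlgebra

variable (K : Type) [Field K] (G : FinGraph)

/-- The image of a vertex in the Leavitt path algebra. -/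
def vert (v : G.V) : LeavittPathAlgebra K G :=
  RingQuot.mkAlgHom K (LeavittRel K G) (FreeAlgebra.ι K (LPAGen.vert v))

/-- The image of an edge in the Leavitt path algebra. -/
def edge (e : G.E) : LeavittPathAlgebra K G :=
  RingQuot.mkAlgHom K (LeavittRel K G) (FreeAlgebra.ι K (LPAGen.edge e))

/-- The image of a ghost edge in the Leavitt path algebra. -/
def ghost (e : G.E) : LeavittPathAlgebra K G :=
  RingQuot.mkAlgHom K (LeavittRel K G) (FreeAlgebra.ι K (LPAGen.ghost e))

end LeavittPathAlgebra

/-! ## Ring-theoretic notions -/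

/-- Two unital rings are Morita equivalent if their categories of left modules
are equivalent. -/
def MoritaEquivalent (R S : Type) [Ring R] [Ring S] : Prop :=
  Nonempty (ModuleCat.{0} R ≌ ModuleCat.{0} S)

/-- An idempotent `e` of a ring `R` is full if `R e R = R`, i.e. `1` is a finite
sum of elements of the form `a * e * b`. -/
def IsFullIdempotent {R : Type} [Ring R] (e : R) : Prop :=
  IsIdempotentElem e ∧ ∃ (n : ℕ) (a b : Fin n → R), (∑ i, a i * e * b i) = 1

/-- `S` is isomorphic, as a (nonunital) `K`-algebra, to the corner ring
`ε R ε = {x : R | ε * x * ε = x}` of `R`. -/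
def IsCornerIso (K : Type) [Field K] (S R : Type) [Ring S] [Ring R]
    [Algebra K S] [Algebra K R] (ε : R) : Prop :=
  ∃ φ : S →ₙₐ[K] R, Function.Injective φ ∧ Set.range φ = {x : R | ε * x * ε = x}

/-- A module `Q` is a generator for the category of left `R`-modules iff `R` is
an epimorphic image (equivalently, a direct summand) of a finite direct sum of
copies of `Q`. -/
def IsGenerator (R Q : Type) [Ring R] [AddCommGroup Q] [Module R Q] : Prop :=
  ∃ (n : ℕ) (f : (Fin n → Q) →ₗ[R] R), Function.Surjective f

namespace LeavittPathAlgebra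

/-! ### The defining relations -/

section Relations

variable (K : Type) [Field K] (G : FinGraph)

lemma vert_mul_vert (v w : G.V) :
    vert K G v * vert K G w = if v = w then vert K G v else 0 := by
  have h := RingQuot.mkAlgHom_rel K (LeavittRel.vertMul (K := K) v w)
  rw [map_mul, apply_ite (RingQuot.mkAlgHom K (LeavittRel K G)), map_zero] at h
  exact h

lemma vert_mul_edge (e : G.E) : vert K G (G.s e) * edge K G e = edge K G e := by
  have h := RingQuot.mkAlgHom_rel K (LeavittRel.edgeLeft (K := K) e)
  rw [map_mul] at h
  exact h

lemma edge_mul_vert (e : G.E) : edge K G e * vert K G (G.r e) = edge K G e := by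
  have h := RingQuot.mkAlgHom_rel K (LeavittRel.edgeRight (K := K) e)
  rw [map_mul] at h
  exact h

lemma vert_mul_ghost (e : G.E) : vert K G (G.r e) * ghost K G e = ghost K G e := by
  have h := RingQuot.mkAlgHom_rel K (LeavittRel.ghostLeft (K := K) e)
  rw [map_mul] at h
  exact h

lemma ghost_mul_vert (e : G.E) : ghost K G e * vert K G (G.s e) = ghost K G e := by
  have h := RingQuot.mkAlgHom_rel K (LeavittRel.ghostRight (K := K) e)
  rw [map_mul] at h
  exact h

lemma ghost_mul_edge (e f : G.E) :
    ghost K G e * edge K G f = if e = f then vert K G (G.r e) else 0 := by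
  have h := RingQuot.mkAlgHom_rel K (LeavittRel.ghostEdge (K := K) e f)
  rw [map_mul, apply_ite (RingQuot.mkAlgHom K (LeavittRel K G)), map_zero] at h
  exact h

lemma vert_eq_sum (v : G.V) (hv : G.IsRegular v) :
    vert K G v = ∑ e ∈ Finset.univ.filter (fun e : G.E => G.s e = v),
      edge K G e * ghost K G e := by
  have h := RingQuot.mkAlgHom_rel K (LeavittRel.cuntzKrieger (K := K) v hv)
  simp only [map_sum, map_mul] at h
  exact h

lemma one_eq_sum : (1 : LeavittPathAlgebra K G) = ∑ v : G.V, vert K G v := by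
  have h := RingQuot.mkAlgHom_rel K (LeavittRel.unit (K := K) (G := G))
  simp only [map_sum, map_one] at h
  exact h

/-- Induction over `L_K(G)` as a non-unital algebra; no case for `1` is needed, since `1` is the
sum of the vertices. -/
lemma induction_gen {p : LeavittPathAlgebra K G → Prop}
    (hv : ∀ v, p (vert K G v)) (he : ∀ e, p (edge K G e)) (hg : ∀ e, p (ghost K G e))
    (h0 : p 0) (hadd : ∀ x y, p x → p y → p (x + y)) (hsmul : ∀ (k : K) x, p x → p (k • x))
    (hmul : ∀ x y, p x → p y → p (x * y)) (x : LeavittPathAlgebra K G) : p x := by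
  obtain ⟨a, rfl⟩ := RingQuot.mkAlgHom_surjective K (LeavittRel K G) x
  induction a using FreeAlgebra.induction with
  | grade0 k =>
    rw [AlgHom.commutes, Algebra.algebraMap_eq_smul_one, one_eq_sum]
    exact hsmul _ _ (Finset.sum_induction _ p hadd h0 fun v _ => hv v)
  | grade1 g =>
    cases g with
    | vert v => exact hv v
    | edge e => exact he e
    | ghost e => exact hg e
  | mul a b ha hb => rw [map_mul]; exact hmul _ _ ha hb
  | add a b ha hb => rw [map_add]; exact hadd _ _ ha hb

end Relations

/-! ### A non-unital universal property -/

/-- The `K`-algebra structure on a corner ring `εAε`; scalars act through `k ↦ k • ε`. -/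
noncomputable abbrev cornerAlgebra (K : Type) [Field K] {A : Type} [Ring A] [Algebra K A] {ε : A}
    (hε : IsIdempotentElem ε) : Algebra K hε.Corner :=
  RingHom.toAlgebra'
    { toFun := fun k => ⟨k • ε, k • (1 : A), by simp [hε.eq]⟩
      map_one' := Subtype.ext (one_smul K ε)
      map_mul' := fun a b => Subtype.ext <| by
        change (a * b) • ε = (a • ε) * (b • ε)
        rw [smul_mul_smul_comm, hε.eq]
      map_zero' := Subtype.ext (zero_smul K ε)
      map_add' := fun a b => Subtype.ext (add_smul a b ε) }
    (fun k x => Subtype.ext <| by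
      have hx := (Subsemigroup.mem_corner_iff hε).mp x.2
      change (k • ε) * x.1 = x.1 * (k • ε)
      rw [smul_mul_assoc, mul_smul_comm, hx.1, hx.2])

/-- Elements of a `K`-algebra `A` indexed by the vertices, edges and ghost edges of `G`, subject to
all the defining relations of `L_K(G)` except that the vertices need not sum to `1`. -/
structure LeavittFamily (G : FinGraph) (A : Type) [Ring A] where
  /-- the images of the vertices -/
  v : G.V → A
  /-- the images of the edges -/
  e : G.E → A
  /-- the images of the ghost edges -/
  g : G.E → A
  v_mul_self : ∀ a, v a * v a = v a
  v_mul_ne : ∀ a b, a ≠ b → v a * v b = 0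
  v_mul_e : ∀ a, v (G.s a) * e a = e a
  e_mul_v : ∀ a, e a * v (G.r a) = e a
  v_mul_g : ∀ a, v (G.r a) * g a = g a
  g_mul_v : ∀ a, g a * v (G.s a) = g a
  g_mul_self : ∀ a, g a * e a = v (G.r a)
  g_mul_ne : ∀ a b, a ≠ b → g a * e b = 0
  v_eq_sum : ∀ a, G.IsRegular a →
    v a = ∑ x ∈ Finset.univ.filter (fun x : G.E => G.s x = a), e x * g x

namespace LeavittFamily

variable {G : FinGraph} {A : Type} [Ring A] (F : LeavittFamily G A)

lemma v_mul_v (a b : G.V) : F.v a * F.v b = if a = b then F.v a else 0 := by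
  split_ifs with h
  · rw [← h, F.v_mul_self]
  · exact F.v_mul_ne a b h

lemma g_mul_e (a b : G.E) : F.g a * F.e b = if a = b then F.v (G.r a) else 0 := by
  split_ifs with h
  · rw [← h, F.g_mul_self]
  · exact F.g_mul_ne a b h

lemma sum_mul_v (a : G.V) : (∑ b, F.v b) * F.v a = F.v a := by
  simp [Finset.sum_mul, F.v_mul_v]

lemma v_mul_sum (a : G.V) : F.v a * (∑ b, F.v b) = F.v a := by
  simp [Finset.mul_sum, F.v_mul_v]

lemma idem : IsIdempotentElem (∑ b, F.v b) := by
  change (∑ b, F.v b) * (∑ b, F.v b) = _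
  conv_lhs => rw [Finset.mul_sum]
  exact Finset.sum_congr rfl fun a _ => F.sum_mul_v a

lemma mem_corner_of {a b : G.V} {x : A} (h1 : F.v a * x = x) (h2 : x * F.v b = x) :
    x ∈ Subsemigroup.corner (∑ b, F.v b) := by
  rw [Subsemigroup.mem_corner_iff F.idem]
  constructor
  · rw [← h1, ← mul_assoc, F.sum_mul_v]
  · rw [← h2, mul_assoc, F.v_mul_sum]

/-- A family satisfying the non-unital Leavitt relations is the image of the generators under a
non-unital algebra homomorphism, namely a unital one into the corner at the sum of the vertices. -/
theorem exists_hom (K : Type) [Field K] [Algebra K A] :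
    ∃ φ : LeavittPathAlgebra K G →ₙₐ[K] A, (∀ a, φ (vert K G a) = F.v a) ∧
      (∀ a, φ (edge K G a) = F.e a) ∧ (∀ a, φ (ghost K G a) = F.g a) := by
  let _ : Algebra K F.idem.Corner := cornerAlgebra K F.idem
  let gen : LPAGen G → F.idem.Corner
    | .vert a => ⟨F.v a, F.mem_corner_of (a := a) (b := a) (by simp [F.v_mul_v])
        (by simp [F.v_mul_v])⟩
    | .edge a => ⟨F.e a, F.mem_corner_of (F.v_mul_e a) (F.e_mul_v a)⟩
    | .ghost a => ⟨F.g a, F.mem_corner_of (F.v_mul_g a) (F.g_mul_v a)⟩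
  let val : F.idem.Corner →+ A :=
    { toFun := fun x => x.1, map_zero' := rfl, map_add' := fun _ _ => rfl }
  have val_inj : Function.Injective val := fun _ _ h => Subtype.ext h
  have val_mul : ∀ x y, val (x * y) = val x * val y := fun _ _ => rfl
  have val_one : val 1 = ∑ b, F.v b := rfl
  have val_v : ∀ a, val (gen (.vert a)) = F.v a := fun _ => rfl
  have val_e : ∀ a, val (gen (.edge a)) = F.e a := fun _ => rfl
  have val_g : ∀ a, val (gen (.ghost a)) = F.g a := fun _ => rfl
  have hrel : ∀ ⦃x y⦄, LeavittRel K G x y →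
      FreeAlgebra.lift K gen x = FreeAlgebra.lift K gen y := by
    intro x y h
    apply val_inj
    cases h with
    | vertMul a b =>
      simp only [map_mul, FreeAlgebra.lift_ι_apply, val_mul, val_v, F.v_mul_v]
      split_ifs <;> simp [val_v]
    | edgeLeft a => simp [val_mul, val_v, val_e, F.v_mul_e]
    | edgeRight a => simp [val_mul, val_v, val_e, F.e_mul_v]
    | ghostLeft a => simp [val_mul, val_v, val_g, F.v_mul_g]
    | ghostRight a => simp [val_mul, val_v, val_g, F.g_mul_v]
    | ghostEdge a b =>
      simp only [map_mul, FreeAlgebra.lift_ι_apply, val_mul, val_e, val_g, F.g_mul_e]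
      split_ifs <;> simp [val_v]
    | cuntzKrieger a ha =>
      simp only [map_sum, map_mul, FreeAlgebra.lift_ι_apply, val_mul, val_e, val_g, val_v]
      exact F.v_eq_sum a ha
    | unit => simp [val_one, val_v]
  let Φ : LeavittPathAlgebra K G →ₐ[K] F.idem.Corner :=
    RingQuot.liftAlgHom K ⟨FreeAlgebra.lift K gen, hrel⟩
  have hΦ : ∀ x, Φ (RingQuot.mkAlgHom K (LeavittRel K G) (FreeAlgebra.ι K x)) = gen x := by
    intro x
    simp only [Φ]
    rw [RingQuot.liftAlgHom_mkAlgHom_apply, FreeAlgebra.lift_ι_apply]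
  refine ⟨{ toFun := fun x => val (Φ x)
            map_smul' := fun k x => ?_
            map_zero' := by simp
            map_add' := fun x y => by simp
            map_mul' := fun x y => by simp [val_mul] }, fun a => ?_, fun a => ?_, fun a => ?_⟩
  · rw [map_smul]
    change (k • ∑ b, F.v b) * val (Φ x) = k • val (Φ x)
    rw [smul_mul_assoc]
    exact congrArg (k • ·) (congrArg val (one_mul (Φ x)))
  · exact congrArg val (hΦ (.vert a))
  · exact congrArg val (hΦ (.edge a))
  · exact congrArg val (hΦ (.ghost a))

end LeavittFamily

/-! ### Products that vanish for source-range reasons -/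

section Products

variable (K : Type) [Field K] (G : FinGraph)

lemma vert_mul_edge_of_ne {u : G.V} {e : G.E} (h : u ≠ G.s e) :
    vert K G u * edge K G e = 0 := by
  rw [← vert_mul_edge, ← mul_assoc, vert_mul_vert, if_neg h, zero_mul]

lemma edge_mul_vert_of_ne {u : G.V} {e : G.E} (h : G.r e ≠ u) :
    edge K G e * vert K G u = 0 := by
  rw [← edge_mul_vert, mul_assoc, vert_mul_vert, if_neg h, mul_zero]

lemma vert_mul_ghost_of_ne {u : G.V} {e : G.E} (h : u ≠ G.r e) :
    vert K G u * ghost K G e = 0 := by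
  rw [← vert_mul_ghost, ← mul_assoc, vert_mul_vert, if_neg h, zero_mul]

lemma ghost_mul_vert_of_ne {u : G.V} {e : G.E} (h : G.s e ≠ u) :
    ghost K G e * vert K G u = 0 := by
  rw [← ghost_mul_vert, mul_assoc, vert_mul_vert, if_neg h, mul_zero]

lemma edge_mul_edge_of_ne {d e : G.E} (h : G.r d ≠ G.s e) : edge K G d * edge K G e = 0 := by
  rw [← vert_mul_edge K G e, ← mul_assoc, edge_mul_vert_of_ne K G h, zero_mul]

lemma ghost_mul_ghost_of_ne {d e : G.E} (h : G.s d ≠ G.r e) :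
    ghost K G d * ghost K G e = 0 := by
  rw [← vert_mul_ghost K G e, ← mul_assoc, ghost_mul_vert_of_ne K G h, zero_mul]

end Products

section MoveR

variable (K : Type) [Field K] (E : FinGraph) (w : E.V) (f : E.E)
    (hsf : E.s f = w) (huniq : ∀ e : E.E, E.s e = w → e = f) (hnl : E.r f ≠ w)

/-! ### The homomorphism from the Move (R) algebra -/

lemma edge_mul_ghost_unique (hsf : E.s f = w) (huniq : ∀ e : E.E, E.s e = w → e = f) :
    edge K E f * ghost K E f = vert K E w := by
  rw [vert_eq_sum K E w ⟨f, hsf⟩]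
  have : Finset.univ.filter (fun e : E.E => E.s e = w) = {f} := by
    ext e
    simp only [Finset.mem_filter, Finset.mem_univ, true_and, Finset.mem_singleton]
    exact ⟨huniq e, fun h => h ▸ hsf⟩
  rw [this, Finset.sum_singleton]

/-- A sum over the edges of `E` whose term at `f` vanishes is a sum over the edges of the Move (R)
graph, split into old and new ones. -/
lemma sum_moveR_edges {A : Type} [AddCommMonoid A] (h : E.E → A) (hf : h f = 0) :
    ∑ e, h e = ∑ x : {e : E.E // E.r e ≠ w ∧ e ≠ f}, h x.1 + ∑ x : {e : E.E // E.r e = w}, h x.1 := by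
  rw [← Finset.sum_subtype (Finset.univ.filter fun e : E.E => E.r e ≠ w ∧ e ≠ f) (by simp) h,
    ← Finset.sum_subtype (Finset.univ.filter fun e : E.E => E.r e = w) (by simp) h,
    Finset.sum_filter, Finset.sum_filter, ← Finset.sum_add_distrib]
  refine Finset.sum_congr rfl fun e _ => ?_
  by_cases h1 : E.r e = w
  · simp [h1]
  · by_cases h2 : e = f
    · subst h2; simp [h1, hf]
    · simp [h1, h2]

/-- The images in `L_K(E)` of the generators of the algebra of the Move (R) graph: vertices and old
edges are kept, and the new edge `[ef]` becomes `e f`. -/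
noncomputable def moveRFamily :
    LeavittFamily (E.moveR w f hsf huniq hnl) (LeavittPathAlgebra K E) where
  v a := vert K E a.1
  e := Sum.elim (fun a => edge K E a.1) (fun a => edge K E a.1 * edge K E f)
  g := Sum.elim (fun a => ghost K E a.1) (fun a => ghost K E f * ghost K E a.1)
  v_mul_self a := by rw [vert_mul_vert, if_pos rfl]
  v_mul_ne a b hab := by rw [vert_mul_vert, if_neg fun h => hab (Subtype.ext h)]
  v_mul_e a := by
    rcases a with a | a
    · exact vert_mul_edge K E a.1
    · change vert K E (E.s a.1) * (edge K E a.1 * edge K E f) = edge K E a.1 * edge K E f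
      rw [← mul_assoc, vert_mul_edge]
  e_mul_v a := by
    rcases a with a | a
    · exact edge_mul_vert K E a.1
    · change edge K E a.1 * edge K E f * vert K E (E.r f) = edge K E a.1 * edge K E f
      rw [mul_assoc, edge_mul_vert]
  v_mul_g a := by
    rcases a with a | a
    · exact vert_mul_ghost K E a.1
    · change vert K E (E.r f) * (ghost K E f * ghost K E a.1) = ghost K E f * ghost K E a.1
      rw [← mul_assoc, vert_mul_ghost]
  g_mul_v a := by
    rcases a with a | a
    · exact ghost_mul_vert K E a.1
    · change ghost K E f * ghost K E a.1 * vert K E (E.s a.1) = ghost K E f * ghost K E a.1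
      rw [mul_assoc, ghost_mul_vert]
  g_mul_self a := by
    rcases a with a | a
    · change ghost K E a.1 * edge K E a.1 = vert K E (E.r a.1)
      rw [ghost_mul_edge, if_pos rfl]
    · change ghost K E f * ghost K E a.1 * (edge K E a.1 * edge K E f) = vert K E (E.r f)
      have hassoc : ghost K E f * ghost K E a.1 * (edge K E a.1 * edge K E f) =
          ghost K E f * (ghost K E a.1 * edge K E a.1 * edge K E f) := by
        simp only [mul_assoc]
      rw [hassoc, ghost_mul_edge, if_pos rfl, a.2, ← hsf, vert_mul_edge, ghost_mul_edge,
        if_pos rfl]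
  g_mul_ne a b hne := by
    rcases a with a | a <;> rcases b with b | b
    · have hab : a.1 ≠ b.1 := fun h => hne (congrArg Sum.inl (Subtype.ext h))
      change ghost K E a.1 * edge K E b.1 = 0
      rw [ghost_mul_edge, if_neg hab]
    · have hab : a.1 ≠ b.1 := fun h => a.2.1 (h ▸ b.2)
      change ghost K E a.1 * (edge K E b.1 * edge K E f) = 0
      rw [← mul_assoc, ghost_mul_edge, if_neg hab, zero_mul]
    · have hab : a.1 ≠ b.1 := fun h => b.2.1 (h ▸ a.2)
      change ghost K E f * ghost K E a.1 * edge K E b.1 = 0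
      rw [mul_assoc, ghost_mul_edge, if_neg hab, mul_zero]
    · have hab : a.1 ≠ b.1 := fun h => hne (congrArg Sum.inr (Subtype.ext h))
      change ghost K E f * ghost K E a.1 * (edge K E b.1 * edge K E f) = 0
      rw [mul_assoc, ← mul_assoc (ghost K E a.1), ghost_mul_edge, if_neg hab, zero_mul, mul_zero]
  v_eq_sum a ha := by
    have hreg : E.IsRegular a.1 := by
      obtain ⟨x | x, hx⟩ := ha
      · exact ⟨x.1, congrArg Subtype.val hx⟩
      · exact ⟨x.1, congrArg Subtype.val hx⟩
    rw [vert_eq_sum K E a.1 hreg, Finset.sum_filter, Finset.sum_filter,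
      sum_moveR_edges E w f _ (if_neg fun h => a.2 (h.symm.trans hsf))]
    refine Eq.trans ?_ (Fintype.sum_sum_type _).symm
    refine congrArg₂ (· + ·) (Finset.sum_congr rfl fun x _ => ?_)
      (Finset.sum_congr rfl fun x _ => ?_)
    · exact if_congr ⟨fun h => Subtype.ext h, fun h => congrArg Subtype.val h⟩ rfl rfl
    · refine if_congr ⟨fun h => Subtype.ext h, fun h => congrArg Subtype.val h⟩ ?_ rfl
      change _ = edge K E x.1 * edge K E f * (ghost K E f * ghost K E x.1)
      have hassoc : edge K E x.1 * edge K E f * (ghost K E f * ghost K E x.1) =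
          edge K E x.1 * (edge K E f * ghost K E f) * ghost K E x.1 := by
        simp only [mul_assoc]
      have hx := edge_mul_vert K E x.1
      rw [x.2] at hx
      rw [hassoc, edge_mul_ghost_unique K E w f hsf huniq, hx]

/-! ### The homomorphism into two-by-two matrices -/

/-- A vertex of `E` other than `w`, as a vertex of the Move (R) graph. -/
def keptVert (u : E.V) (h : u ≠ w) : (E.moveR w f hsf huniq hnl).V := ⟨u, h⟩

/-- An edge of `E` that survives in the Move (R) graph. -/
def oldEdge (a : E.E) (h : E.r a ≠ w) (h' : a ≠ f) : (E.moveR w f hsf huniq hnl).E :=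
  Sum.inl ⟨a, h, h'⟩

/-- The edge `[af]` of the Move (R) graph, for an edge `a` of `E` into `w`. -/
def newEdge (a : E.E) (h : E.r a = w) : (E.moveR w f hsf huniq hnl).E := Sum.inr ⟨a, h⟩

lemma keptVert_ne {u v : E.V} (hu : u ≠ w) (hv : v ≠ w) (h : u ≠ v) :
    keptVert E w f hsf huniq hnl u hu ≠ keptVert E w f hsf huniq hnl v hv :=
  fun hk => h (congrArg Subtype.val hk)

lemma newEdge_ne {a b : E.E} (ha : E.r a = w) (hb : E.r b = w) (h : a ≠ b) :
    newEdge E w f hsf huniq hnl a ha ≠ newEdge E w f hsf huniq hnl b hb :=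
  fun hk => h (congrArg Subtype.val (Sum.inr_injective hk))

lemma oldEdge_ne {a b : E.E} (ha : E.r a ≠ w) (ha' : a ≠ f) (hb : E.r b ≠ w) (hb' : b ≠ f)
    (h : a ≠ b) : oldEdge E w f hsf huniq hnl a ha ha' ≠ oldEdge E w f hsf huniq hnl b hb hb' :=
  fun hk => h (congrArg Subtype.val (Sum.inl_injective hk))

lemma oldEdge_ne_newEdge {a b : E.E} (ha : E.r a ≠ w) (ha' : a ≠ f) (hb : E.r b = w) :
    oldEdge E w f hsf huniq hnl a ha ha' ≠ newEdge E w f hsf huniq hnl b hb :=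
  Sum.inl_ne_inr

/-- The image of a vertex of `E` in the matrices over the Move (R) algebra. -/
noncomputable def matV (u : E.V) :
    Matrix (Fin 2) (Fin 2) (LeavittPathAlgebra K (E.moveR w f hsf huniq hnl)) :=
  if h : u = w then Matrix.single 1 1 (vert K _ (keptVert E w f hsf huniq hnl (E.r f) hnl))
  else Matrix.single 0 0 (vert K _ (keptVert E w f hsf huniq hnl u h))

/-- The image of an edge of `E` in the matrices over the Move (R) algebra. -/
noncomputable def matE (a : E.E) :
    Matrix (Fin 2) (Fin 2) (LeavittPathAlgebra K (E.moveR w f hsf huniq hnl)) :=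
  if h : E.r a = w then Matrix.single 0 1 (edge K _ (newEdge E w f hsf huniq hnl a h))
  else if h' : a = f then
    Matrix.single 1 0 (vert K _ (keptVert E w f hsf huniq hnl (E.r f) hnl))
  else Matrix.single 0 0 (edge K _ (oldEdge E w f hsf huniq hnl a h h'))

/-- The image of a ghost edge of `E` in the matrices over the Move (R) algebra. -/
noncomputable def matG (a : E.E) :
    Matrix (Fin 2) (Fin 2) (LeavittPathAlgebra K (E.moveR w f hsf huniq hnl)) :=
  if h : E.r a = w then Matrix.single 1 0 (ghost K _ (newEdge E w f hsf huniq hnl a h))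
  else if h' : a = f then
    Matrix.single 0 1 (vert K _ (keptVert E w f hsf huniq hnl (E.r f) hnl))
  else Matrix.single 0 0 (ghost K _ (oldEdge E w f hsf huniq hnl a h h'))

lemma matV_w : matV K E w f hsf huniq hnl w =
    Matrix.single 1 1 (vert K _ (keptVert E w f hsf huniq hnl (E.r f) hnl)) := dif_pos rfl

lemma matV_of_ne {u : E.V} (h : u ≠ w) : matV K E w f hsf huniq hnl u =
    Matrix.single 0 0 (vert K _ (keptVert E w f hsf huniq hnl u h)) := dif_neg h

lemma matE_new {a : E.E} (h : E.r a = w) : matE K E w f hsf huniq hnl a =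
    Matrix.single 0 1 (edge K _ (newEdge E w f hsf huniq hnl a h)) := dif_pos h

lemma matE_f : matE K E w f hsf huniq hnl f =
    Matrix.single 1 0 (vert K _ (keptVert E w f hsf huniq hnl (E.r f) hnl)) := by
  rw [matE, dif_neg hnl, dif_pos rfl]

lemma matE_old {a : E.E} (h : E.r a ≠ w) (h' : a ≠ f) : matE K E w f hsf huniq hnl a =
    Matrix.single 0 0 (edge K _ (oldEdge E w f hsf huniq hnl a h h')) := by
  rw [matE, dif_neg h, dif_neg h']

lemma matG_new {a : E.E} (h : E.r a = w) : matG K E w f hsf huniq hnl a =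
    Matrix.single 1 0 (ghost K _ (newEdge E w f hsf huniq hnl a h)) := dif_pos h

lemma matG_f : matG K E w f hsf huniq hnl f =
    Matrix.single 0 1 (vert K _ (keptVert E w f hsf huniq hnl (E.r f) hnl)) := by
  rw [matG, dif_neg hnl, dif_pos rfl]

lemma matG_old {a : E.E} (h : E.r a ≠ w) (h' : a ≠ f) : matG K E w f hsf huniq hnl a =
    Matrix.single 0 0 (ghost K _ (oldEdge E w f hsf huniq hnl a h h')) := by
  rw [matG, dif_neg h, dif_neg h']

/-- Every edge of `E` is an edge into `w`, the edge `f`, or an edge avoiding `w` altogether. -/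
lemma edge_trichotomy (huniq : ∀ e : E.E, E.s e = w → e = f) (a : E.E) :
    (E.r a = w ∧ E.s a ≠ w ∧ a ≠ f) ∨ a = f ∨ (E.r a ≠ w ∧ a ≠ f ∧ E.s a ≠ w) := by
  by_cases h' : a = f
  · exact Or.inr (Or.inl h')
  have hs : E.s a ≠ w := fun h => h' (huniq a h)
  by_cases h : E.r a = w
  · exact Or.inl ⟨h, hs, h'⟩
  · exact Or.inr (Or.inr ⟨h, h', hs⟩)

/-- The generators of `L_K(E)` realised in `M₂(L_K(G))`, for `G` the Move (R) graph. -/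
noncomputable def matrixFamily : LeavittFamily E
    (Matrix (Fin 2) (Fin 2) (LeavittPathAlgebra K (E.moveR w f hsf huniq hnl))) where
  v := matV K E w f hsf huniq hnl
  e := matE K E w f hsf huniq hnl
  g := matG K E w f hsf huniq hnl
  v_mul_self a := by
    by_cases h : a = w
    · subst h
      rw [matV_w, Matrix.single_mul_single_same, vert_mul_vert, if_pos rfl]
    · rw [matV_of_ne _ _ _ _ _ _ _ h, Matrix.single_mul_single_same, vert_mul_vert, if_pos rfl]
  v_mul_ne a b hab := by
    by_cases h : a = w
    · subst h
      rw [matV_w, matV_of_ne _ _ _ _ _ _ _ hab.symm]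
      exact Matrix.single_mul_single_of_ne _ _ _ _ (by decide) _
    · rw [matV_of_ne _ _ _ _ _ _ _ h]
      by_cases h' : b = w
      · subst h'
        rw [matV_w]
        exact Matrix.single_mul_single_of_ne _ _ _ _ (by decide) _
      · rw [matV_of_ne _ _ _ _ _ _ _ h', Matrix.single_mul_single_same, vert_mul_vert,
          if_neg (keptVert_ne _ _ _ _ _ _ _ _ hab), Matrix.single_zero]
  v_mul_e a := by
    rcases edge_trichotomy E w f huniq a with ⟨hr, hs, -⟩ | rfl | ⟨hr, ha, hs⟩
    · rw [matE_new _ _ _ _ _ _ _ hr, matV_of_ne _ _ _ _ _ _ _ hs, Matrix.single_mul_single_same]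
      exact congrArg _ (vert_mul_edge K _ (newEdge E w f hsf huniq hnl a hr))
    · rw [hsf, matV_w, matE_f, Matrix.single_mul_single_same, vert_mul_vert, if_pos rfl]
    · rw [matE_old _ _ _ _ _ _ _ hr ha, matV_of_ne _ _ _ _ _ _ _ hs, Matrix.single_mul_single_same]
      exact congrArg _ (vert_mul_edge K _ (oldEdge E w f hsf huniq hnl a hr ha))
  e_mul_v a := by
    rcases edge_trichotomy E w f huniq a with ⟨hr, hs, -⟩ | rfl | ⟨hr, ha, hs⟩
    · rw [matE_new _ _ _ _ _ _ _ hr, hr, matV_w, Matrix.single_mul_single_same]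
      exact congrArg _ (edge_mul_vert K _ (newEdge E w f hsf huniq hnl a hr))
    · rw [matV_of_ne _ _ _ _ _ _ _ hnl, matE_f, Matrix.single_mul_single_same, vert_mul_vert,
        if_pos rfl]
    · rw [matE_old _ _ _ _ _ _ _ hr ha, matV_of_ne _ _ _ _ _ _ _ hr, Matrix.single_mul_single_same]
      exact congrArg _ (edge_mul_vert K _ (oldEdge E w f hsf huniq hnl a hr ha))
  v_mul_g a := by
    rcases edge_trichotomy E w f huniq a with ⟨hr, hs, -⟩ | rfl | ⟨hr, ha, hs⟩
    · rw [matG_new _ _ _ _ _ _ _ hr, hr, matV_w, Matrix.single_mul_single_same]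
      exact congrArg _ (vert_mul_ghost K _ (newEdge E w f hsf huniq hnl a hr))
    · rw [matV_of_ne _ _ _ _ _ _ _ hnl, matG_f, Matrix.single_mul_single_same, vert_mul_vert,
        if_pos rfl]
    · rw [matG_old _ _ _ _ _ _ _ hr ha, matV_of_ne _ _ _ _ _ _ _ hr, Matrix.single_mul_single_same]
      exact congrArg _ (vert_mul_ghost K _ (oldEdge E w f hsf huniq hnl a hr ha))
  g_mul_v a := by
    rcases edge_trichotomy E w f huniq a with ⟨hr, hs, -⟩ | rfl | ⟨hr, ha, hs⟩
    · rw [matG_new _ _ _ _ _ _ _ hr, matV_of_ne _ _ _ _ _ _ _ hs, Matrix.single_mul_single_same]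
      exact congrArg _ (ghost_mul_vert K _ (newEdge E w f hsf huniq hnl a hr))
    · rw [hsf, matV_w, matG_f, Matrix.single_mul_single_same, vert_mul_vert, if_pos rfl]
    · rw [matG_old _ _ _ _ _ _ _ hr ha, matV_of_ne _ _ _ _ _ _ _ hs, Matrix.single_mul_single_same]
      exact congrArg _ (ghost_mul_vert K _ (oldEdge E w f hsf huniq hnl a hr ha))
  g_mul_self a := by
    rcases edge_trichotomy E w f huniq a with ⟨hr, hs, -⟩ | rfl | ⟨hr, ha, hs⟩
    · rw [matG_new _ _ _ _ _ _ _ hr, matE_new _ _ _ _ _ _ _ hr, hr, matV_w,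
        Matrix.single_mul_single_same, ghost_mul_edge, if_pos rfl]
      rfl
    · rw [matG_f, matE_f, matV_of_ne _ _ _ _ _ _ _ hnl, Matrix.single_mul_single_same,
        vert_mul_vert, if_pos rfl]
    · rw [matG_old _ _ _ _ _ _ _ hr ha, matE_old _ _ _ _ _ _ _ hr ha,
        matV_of_ne _ _ _ _ _ _ _ hr, Matrix.single_mul_single_same, ghost_mul_edge, if_pos rfl]
      rfl
  g_mul_ne a b hab := by
    rcases edge_trichotomy E w f huniq a with ⟨hr, hs, ha⟩ | rfl | ⟨hr, ha, hs⟩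
    · rw [matG_new _ _ _ _ _ _ _ hr]
      rcases edge_trichotomy E w f huniq b with ⟨hr', hs', hb⟩ | rfl | ⟨hr', hb, hs'⟩
      · rw [matE_new _ _ _ _ _ _ _ hr', Matrix.single_mul_single_same, ghost_mul_edge,
          if_neg (newEdge_ne _ _ _ _ _ _ _ _ hab), Matrix.single_zero]
      · rw [matE_f]
        exact Matrix.single_mul_single_of_ne _ _ _ _ (by decide) _
      · rw [matE_old _ _ _ _ _ _ _ hr' hb, Matrix.single_mul_single_same, ghost_mul_edge,
          if_neg (oldEdge_ne_newEdge _ _ _ _ _ _ _ _ _).symm, Matrix.single_zero]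
    · rw [matG_f]
      rcases edge_trichotomy E w a huniq b with ⟨hr', hs', hb⟩ | rfl | ⟨hr', hb, hs'⟩
      · rw [matE_new _ _ _ _ _ _ _ hr']
        exact Matrix.single_mul_single_of_ne _ _ _ _ (by decide) _
      · exact absurd rfl hab
      · rw [matE_old _ _ _ _ _ _ _ hr' hb]
        exact Matrix.single_mul_single_of_ne _ _ _ _ (by decide) _
    · rw [matG_old _ _ _ _ _ _ _ hr ha]
      rcases edge_trichotomy E w f huniq b with ⟨hr', hs', hb⟩ | rfl | ⟨hr', hb, hs'⟩
      · rw [matE_new _ _ _ _ _ _ _ hr', Matrix.single_mul_single_same, ghost_mul_edge,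
          if_neg (oldEdge_ne_newEdge _ _ _ _ _ _ _ _ _), Matrix.single_zero]
      · rw [matE_f]
        exact Matrix.single_mul_single_of_ne _ _ _ _ (by decide) _
      · rw [matE_old _ _ _ _ _ _ _ hr' hb, Matrix.single_mul_single_same, ghost_mul_edge,
          if_neg (oldEdge_ne _ _ _ _ _ _ _ _ _ _ hab), Matrix.single_zero]
  v_eq_sum u hu := by
    by_cases h : u = w
    · have hfil : Finset.univ.filter (fun e : E.E => E.s e = u) = {f} := by
        ext e
        simp only [Finset.mem_filter, Finset.mem_univ, true_and, Finset.mem_singleton, h]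
        exact ⟨huniq e, fun h => h ▸ hsf⟩
      rw [hfil, Finset.sum_singleton, h, matV_w, matE_f, matG_f, Matrix.single_mul_single_same,
        vert_mul_vert, if_pos rfl]
    · have hreg : (E.moveR w f hsf huniq hnl).IsRegular (keptVert E w f hsf huniq hnl u h) := by
        obtain ⟨x, rfl⟩ := hu
        rcases edge_trichotomy E w f huniq x with ⟨hr, hs, ha⟩ | rfl | ⟨hr, ha, hs⟩
        · exact ⟨newEdge E w f hsf huniq hnl x hr, rfl⟩
        · exact absurd hsf h
        · exact ⟨oldEdge E w f hsf huniq hnl x hr ha, rfl⟩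
      rw [matV_of_ne _ _ _ _ _ _ _ h, vert_eq_sum K _ _ hreg, Finset.sum_filter, Finset.sum_filter,
        sum_moveR_edges E w f _ (if_neg fun hk => h (hk.symm.trans hsf)),
        ← Matrix.singleAddMonoidHom_apply, map_sum]
      refine (Fintype.sum_sum_type _).trans ?_
      refine congrArg₂ (· + ·) (Finset.sum_congr rfl fun x _ => ?_)
        (Finset.sum_congr rfl fun x _ => ?_)
      · rw [apply_ite (Matrix.singleAddMonoidHom 0 0), map_zero,
          matE_old _ _ _ _ _ _ _ x.2.1 x.2.2, matG_old _ _ _ _ _ _ _ x.2.1 x.2.2,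
          Matrix.single_mul_single_same]
        exact if_congr ⟨fun h => congrArg Subtype.val h, fun h => Subtype.ext h⟩ rfl rfl
      · rw [apply_ite (Matrix.singleAddMonoidHom 0 0), map_zero,
          matE_new _ _ _ _ _ _ _ x.2, matG_new _ _ _ _ _ _ _ x.2,
          Matrix.single_mul_single_same]
        exact if_congr ⟨fun h => congrArg Subtype.val h, fun h => Subtype.ext h⟩ rfl rfl

/-! ### The idempotent `ε` and its corner -/

/-- The sum `ε` of the vertices other than `w`. -/
noncomputable def eps : LeavittPathAlgebra K E :=
  ∑ u ∈ Finset.univ.filter (fun u : E.V => u ≠ w), vert K E u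

lemma eps_mul_vert {u : E.V} (h : u ≠ w) : eps K E w * vert K E u = vert K E u := by
  simp [eps, Finset.sum_mul, vert_mul_vert, Finset.sum_ite_eq', h]

lemma vert_mul_eps {u : E.V} (h : u ≠ w) : vert K E u * eps K E w = vert K E u := by
  simp [eps, Finset.mul_sum, vert_mul_vert, Finset.sum_ite_eq, h]

lemma eps_mul_vert_self : eps K E w * vert K E w = 0 := by
  simp [eps, Finset.sum_mul, vert_mul_vert, Finset.sum_ite_eq']

lemma vert_self_mul_eps : vert K E w * eps K E w = 0 := by
  simp [eps, Finset.mul_sum, vert_mul_vert, Finset.sum_ite_eq]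

lemma eps_idem : eps K E w * eps K E w = eps K E w := by
  conv_lhs => rw [eps, Finset.sum_mul]
  exact Finset.sum_congr rfl fun u hu => vert_mul_eps K E w (Finset.mem_filter.mp hu).2

lemma one_eq_eps_add (hsf : E.s f = w) (huniq : ∀ e : E.E, E.s e = w → e = f) :
    (1 : LeavittPathAlgebra K E) = eps K E w + edge K E f * ghost K E f := by
  rw [edge_mul_ghost_unique K E w f hsf huniq, one_eq_sum, eps, Finset.filter_ne',
    Finset.sum_erase_add _ _ (Finset.mem_univ w)]

lemma eps_mul_edge {a : E.E} (h : E.s a ≠ w) : eps K E w * edge K E a = edge K E a := by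
  rw [← vert_mul_edge, ← mul_assoc, eps_mul_vert K E w h]

lemma edge_mul_eps {a : E.E} (h : E.r a ≠ w) : edge K E a * eps K E w = edge K E a := by
  rw [← edge_mul_vert, mul_assoc, vert_mul_eps K E w h]

lemma edge_mul_eps_of_eq {a : E.E} (h : E.r a = w) : edge K E a * eps K E w = 0 := by
  rw [← edge_mul_vert, h, mul_assoc, vert_self_mul_eps, mul_zero]

lemma eps_mul_edge_of_eq {a : E.E} (h : E.s a = w) : eps K E w * edge K E a = 0 := by
  rw [← vert_mul_edge, h, ← mul_assoc, eps_mul_vert_self, zero_mul]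

lemma eps_mul_ghost {a : E.E} (h : E.r a ≠ w) : eps K E w * ghost K E a = ghost K E a := by
  rw [← vert_mul_ghost, ← mul_assoc, eps_mul_vert K E w h]

lemma ghost_mul_eps {a : E.E} (h : E.s a ≠ w) : ghost K E a * eps K E w = ghost K E a := by
  rw [← ghost_mul_vert, mul_assoc, vert_mul_eps K E w h]

lemma eps_mul_ghost_of_eq {a : E.E} (h : E.r a = w) : eps K E w * ghost K E a = 0 := by
  rw [← vert_mul_ghost, h, ← mul_assoc, eps_mul_vert_self, zero_mul]

lemma ghost_mul_eps_of_eq {a : E.E} (h : E.s a = w) : ghost K E a * eps K E w = 0 := by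
  rw [← ghost_mul_vert, h, mul_assoc, vert_self_mul_eps, mul_zero]

lemma isFullIdempotent_eps (hsf : E.s f = w) (huniq : ∀ e : E.E, E.s e = w → e = f) (hnl : E.r f ≠ w) :
    IsFullIdempotent (eps K E w) := by
  refine ⟨eps_idem K E w, 2, ![eps K E w, edge K E f], ![1, ghost K E f], ?_⟩
  simp only [Fin.sum_univ_two, Matrix.cons_val_zero, Matrix.cons_val_one]
  rw [eps_idem, mul_one, edge_mul_eps K E w hnl]
  exact (one_eq_eps_add K E w f hsf huniq).symm

/-- A non-unital subalgebra `N` containing the images of the generators of the Move (R) algebra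
contains `p x q` for all `x ∈ L_K(E)`, `p ∈ {ε, f*}` and `q ∈ {ε, f}`. -/
lemma compress_mem (hsf : E.s f = w) (huniq : ∀ e : E.E, E.s e = w → e = f)
    (hnl : E.r f ≠ w) (N : NonUnitalSubalgebra K (LeavittPathAlgebra K E))
    (hNv : ∀ u, u ≠ w → vert K E u ∈ N)
    (hNe : ∀ a, E.r a ≠ w → a ≠ f → edge K E a ∈ N)
    (hNg : ∀ a, E.r a ≠ w → a ≠ f → ghost K E a ∈ N)
    (hNe' : ∀ a, E.r a = w → edge K E a * edge K E f ∈ N)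
    (hNg' : ∀ a, E.r a = w → ghost K E f * ghost K E a ∈ N) (x : LeavittPathAlgebra K E) :
    eps K E w * x * eps K E w ∈ N ∧ eps K E w * x * edge K E f ∈ N ∧
      ghost K E f * x * eps K E w ∈ N ∧ ghost K E f * x * edge K E f ∈ N := by
  have hgf : ghost K E f * edge K E f = vert K E (E.r f) := by rw [ghost_mul_edge, if_pos rfl]
  induction x using induction_gen with
  | hv u =>
    by_cases h : u = w
    · have h1 : ghost K E f * vert K E u = ghost K E f := by
        rw [h, ← hsf, ghost_mul_vert]
      rw [h1, hgf, ghost_mul_eps_of_eq K E w hsf, h, eps_mul_vert_self, zero_mul, zero_mul]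
      exact ⟨N.zero_mem, N.zero_mem, N.zero_mem, hNv _ hnl⟩
    · have hs : E.s f ≠ u := fun hk => h (hk.symm.trans hsf)
      rw [eps_mul_vert K E w h, vert_mul_eps K E w h, vert_mul_edge_of_ne K E hs.symm,
        ghost_mul_vert_of_ne K E hs, zero_mul, zero_mul]
      exact ⟨hNv _ h, N.zero_mem, N.zero_mem, N.zero_mem⟩
  | he a =>
    have hff : vert K E (E.r f) * edge K E f = 0 :=
      vert_mul_edge_of_ne K E (fun hk => hnl (hk.trans hsf))
    rcases edge_trichotomy E w f huniq a with ⟨hr, hs, ha⟩ | rfl | ⟨hr, ha, hs⟩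
    · rw [eps_mul_edge K E w hs, edge_mul_eps_of_eq K E w hr, ghost_mul_edge,
        if_neg (Ne.symm ha), zero_mul, zero_mul]
      exact ⟨N.zero_mem, hNe' a hr, N.zero_mem, N.zero_mem⟩
    · rw [eps_mul_edge_of_eq K E w hsf, hgf, vert_mul_eps K E w hnl, hff, zero_mul, zero_mul]
      exact ⟨N.zero_mem, N.zero_mem, hNv _ hnl, N.zero_mem⟩
    · rw [eps_mul_edge K E w hs, edge_mul_eps K E w hr, ghost_mul_edge, if_neg (Ne.symm ha),
        zero_mul, zero_mul, edge_mul_edge_of_ne K E (fun hk => hr (hk.trans hsf))]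
      exact ⟨hNe a hr ha, N.zero_mem, N.zero_mem, N.zero_mem⟩
  | hg a =>
    have hff : ghost K E f * vert K E (E.r f) = 0 :=
      ghost_mul_vert_of_ne K E (fun hk => hnl (hk.symm.trans hsf))
    simp only [mul_assoc]
    rcases edge_trichotomy E w f huniq a with ⟨hr, hs, ha⟩ | rfl | ⟨hr, ha, hs⟩
    · rw [ghost_mul_eps K E w hs, eps_mul_ghost_of_eq K E w hr, ghost_mul_edge, if_neg ha,
        mul_zero, mul_zero]
      exact ⟨N.zero_mem, N.zero_mem, hNg' a hr, N.zero_mem⟩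
    · rw [ghost_mul_eps_of_eq K E w hsf, hgf, eps_mul_vert K E w hnl, hff, mul_zero, mul_zero]
      exact ⟨N.zero_mem, hNv _ hnl, N.zero_mem, N.zero_mem⟩
    · rw [ghost_mul_eps K E w hs, eps_mul_ghost K E w hr, ghost_mul_edge, if_neg ha,
        mul_zero, mul_zero, ghost_mul_ghost_of_ne K E (fun hk => hr (hk.symm.trans hsf))]
      exact ⟨hNg a hr ha, N.zero_mem, N.zero_mem, N.zero_mem⟩
  | h0 => simp
  | hadd x y hx hy =>
    simp only [mul_add, add_mul]
    exact ⟨N.add_mem hx.1 hy.1, N.add_mem hx.2.1 hy.2.1, N.add_mem hx.2.2.1 hy.2.2.1,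
      N.add_mem hx.2.2.2 hy.2.2.2⟩
  | hsmul k x hx =>
    simp only [mul_smul_comm, smul_mul_assoc]
    exact ⟨N.smul_mem k hx.1, N.smul_mem k hx.2.1, N.smul_mem k hx.2.2.1, N.smul_mem k hx.2.2.2⟩
  | hmul x y hx hy =>
    -- insert `1 = ε ε + f f*` between the two factors
    have key : ∀ p q : LeavittPathAlgebra K E, p * (x * y) * q =
        (p * x * eps K E w) * (eps K E w * y * q) +
          (p * x * edge K E f) * (ghost K E f * y * q) := by
      intro p q
      calc p * (x * y) * q = p * x * 1 * (y * q) := by simp only [mul_assoc, one_mul]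
        _ = p * x * (eps K E w * eps K E w + edge K E f * ghost K E f) * (y * q) := by
          rw [eps_idem, ← one_eq_eps_add K E w f hsf huniq]
        _ = _ := by simp only [mul_add, add_mul, mul_assoc]
    simp only [key]
    obtain ⟨hx1, hx2, hx3, hx4⟩ := hx
    obtain ⟨hy1, hy2, hy3, hy4⟩ := hy
    exact ⟨N.add_mem (N.mul_mem hx1 hy1) (N.mul_mem hx2 hy3),
      N.add_mem (N.mul_mem hx1 hy2) (N.mul_mem hx2 hy4),
      N.add_mem (N.mul_mem hx3 hy1) (N.mul_mem hx4 hy3),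
      N.add_mem (N.mul_mem hx3 hy2) (N.mul_mem hx4 hy4)⟩

/-- The witness is the homomorphism of `moveRFamily`; the one of `matrixFamily` gives injectivity,
and `compress_mem` gives surjectivity onto the corner. -/
theorem isCornerIso_eps : IsCornerIso K (LeavittPathAlgebra K (E.moveR w f hsf huniq hnl))
    (LeavittPathAlgebra K E) (eps K E w) := by
  obtain ⟨φ, hφv, hφe, hφg⟩ := (moveRFamily K E w f hsf huniq hnl).exists_hom K
  obtain ⟨ψ, hψv, hψe, hψg⟩ := (matrixFamily K E w f hsf huniq hnl).exists_hom K
  have hV : ∀ u (h : u ≠ w), φ (vert K _ (keptVert E w f hsf huniq hnl u h)) = vert K E u :=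
    fun u h => hφv _
  have hE : ∀ a (h : E.r a ≠ w) (h' : a ≠ f),
      φ (edge K _ (oldEdge E w f hsf huniq hnl a h h')) = edge K E a := fun a h h' => hφe _
  have hG : ∀ a (h : E.r a ≠ w) (h' : a ≠ f),
      φ (ghost K _ (oldEdge E w f hsf huniq hnl a h h')) = ghost K E a := fun a h h' => hφg _
  have hE' : ∀ a (h : E.r a = w),
      φ (edge K _ (newEdge E w f hsf huniq hnl a h)) = edge K E a * edge K E f := fun a h => hφe _
  have hG' : ∀ a (h : E.r a = w),
      φ (ghost K _ (newEdge E w f hsf huniq hnl a h)) = ghost K E f * ghost K E a :=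
    fun a h => hφg _
  have hψV : ∀ u, ψ (vert K E u) = matV K E w f hsf huniq hnl u := hψv
  have hψE : ∀ a, ψ (edge K E a) = matE K E w f hsf huniq hnl a := hψe
  have hψG : ∀ a, ψ (ghost K E a) = matG K E w f hsf huniq hnl a := hψg
  refine ⟨φ, ?_, ?_⟩
  · have hψφ : ∀ x, ψ (φ x) = Matrix.single 0 0 x := by
      intro x
      induction x using induction_gen with
      | hv u =>
        obtain ⟨u, hu⟩ := u
        exact (congrArg ψ (hV u hu)).trans
          ((hψV u).trans (matV_of_ne K E w f hsf huniq hnl hu))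
      | he a =>
        rcases a with ⟨a, h, h'⟩ | ⟨a, h⟩
        · exact (congrArg ψ (hE a h h')).trans
            ((hψE a).trans (matE_old K E w f hsf huniq hnl h h'))
        · refine (congrArg ψ (hE' a h)).trans ?_
          rw [map_mul, hψE, hψE, matE_f, matE_new _ _ _ _ _ _ _ h, Matrix.single_mul_single_same]
          exact congrArg _ (edge_mul_vert K _ (newEdge E w f hsf huniq hnl a h))
      | hg a =>
        rcases a with ⟨a, h, h'⟩ | ⟨a, h⟩
        · exact (congrArg ψ (hG a h h')).trans
            ((hψG a).trans (matG_old K E w f hsf huniq hnl h h'))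
        · refine (congrArg ψ (hG' a h)).trans ?_
          rw [map_mul, hψG, hψG, matG_f, matG_new _ _ _ _ _ _ _ h, Matrix.single_mul_single_same]
          exact congrArg _ (vert_mul_ghost K _ (newEdge E w f hsf huniq hnl a h))
      | h0 => rw [map_zero, map_zero, Matrix.single_zero]
      | hadd x y hx hy => rw [map_add, map_add, hx, hy, Matrix.single_add]
      | hsmul k x hx => rw [map_smul, map_smul, hx, Matrix.smul_single]
      | hmul x y hx hy => rw [map_mul, map_mul, hx, hy, Matrix.single_mul_single_same]
    intro x y hxy
    have h := (hψφ x).symm.trans ((congrArg ψ hxy).trans (hψφ y))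
    simpa using congrFun (congrFun h 0) 0
  · apply Set.Subset.antisymm
    · rintro _ ⟨x, rfl⟩
      have hone : φ 1 = eps K E w := by
        rw [one_eq_sum, map_sum, eps]
        refine Eq.trans ?_
          (Finset.sum_subtype (p := fun u : E.V => u ≠ w) (F := (E.moveR w f hsf huniq hnl).fintypeV)
            (Finset.univ.filter fun u : E.V => u ≠ w) (by simp) (vert K E)).symm
        exact Finset.sum_congr rfl fun u _ => hφv u
      change eps K E w * φ x * eps K E w = φ x
      rw [← hone, ← map_mul, ← map_mul, one_mul, mul_one]
    · intro x hx
      have hmem := (compress_mem K E w f hsf huniq hnl (NonUnitalAlgHom.range φ)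
        (fun u h => ⟨_, hV u h⟩) (fun a h h' => ⟨_, hE a h h'⟩) (fun a h h' => ⟨_, hG a h h'⟩)
        (fun a h => ⟨_, hE' a h⟩) (fun a h => ⟨_, hG' a h⟩) x).1
      rw [show eps K E w * x * eps K E w = x from hx] at hmem
      exact hmem

end MoveR

end LeavittPathAlgebra

/-- For Move (R) at `w`, the sum `ε` of the vertices other than `w`
is a full idempotent of `L_K(E)` and `L_K(G) ≅ ε L_K(E) ε`. -/
theorem moveR_corner_iso (K : Type) [Field K] (E : FinGraph) (w : E.V) (f : E.E)
    (hsf : E.s f = w) (huniq : ∀ e : E.E, E.s e = w → e = f) (hnl : E.r f ≠ w)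
    (hrecv : ∃ u : E.V, ∀ e : E.E, E.r e = w → E.s e = u) :
    IsFullIdempotent
      (∑ u ∈ Finset.univ.filter (fun u : E.V => u ≠ w), LeavittPathAlgebra.vert K E u) ∧
    IsCornerIso K (LeavittPathAlgebra K (E.moveR w f hsf huniq hnl)) (LeavittPathAlgebra K E)
      (∑ u ∈ Finset.univ.filter (fun u : E.V => u ≠ w), LeavittPathAlgebra.vert K E u) := by
  exact ⟨LeavittPathAlgebra.isFullIdempotent_eps K E w f hsf huniq hnl,
    LeavittPathAlgebra.isCornerIso_eps K E w f hsf huniq hnl⟩
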